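/- For every u ∈ δ ∩ ℤ^n, the sum A_u = Σ γ_l · a_j^{p^l}, taken over all pairs (j, l) with 1 ≤ j ≤ N, l ≥ 0 and p^l·w_j = u (a finite set, since w_j ≠ 0), satisfies ord(A_u) ≥ w(u)/(p−1). (This expresses that the formal Laurent series H(x) = Σ_{j=1}^N h(a_j x^{w_j}), where h(t) = Σ_{l≥0} γ_l t^{p^l}, lies in the space L(1/(p−1), 0) of series Σ_u A_u x^u with ord(A_u) ≥ w(u)/(p−1).) -/

import Mathlib

/-!
Since the series `∑ γ^{p^i}/p^i` sums to zero, `γ_l` is minus its tail. A term of index `i > l` has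
`ord ≥ p^i/(p-1) - i`, and `p^i - p^l ≥ (p-1) p^{i-1} ≥ (p-1) i` turns this into
`ord ≥ p^l/(p-1)`, a bound which passes to `γ_l` because `K` is nonarchimedean. On the other side,
`p^l w_j = u` puts `u` in `p^l • Δ`, so `w(u) ≤ p^l`. Hence each summand of `A_u` has
`ord ≥ p^l/(p-1) ≥ w(u)/(p-1)`.
-/

open Pointwise

/-- The real vector associated to an integer lattice vector. -/
def intToReal (n : ℕ) (u : Fin n → ℤ) : Fin n → ℝ := fun i => (u i : ℝ)

/-- The convex cone `δ` generated by `w₁, …, w_N`. -/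
def deltaCone (n N : ℕ) (w : Fin N → Fin n → ℤ) : Set (Fin n → ℝ) :=
  {x | ∃ c : Fin N → ℝ, (∀ j, 0 ≤ c j) ∧ x = ∑ j, c j • intToReal n (w j)}

/-- The Newton polyhedron `Δ`: the convex hull of `{w₁, …, w_N} ∪ {0}`. -/
def newtonPolyhedron (n N : ℕ) (w : Fin N → Fin n → ℤ) : Set (Fin n → ℝ) :=
  convexHull ℝ (insert 0 (Set.range fun j => intToReal n (w j)))

/-- The weight function `w(u) = inf {c : 0 ≤ c ∧ u ∈ c • Δ}`. -/
noncomputable def weight (n N : ℕ) (w : Fin N → Fin n → ℤ) (u : Fin n → ℝ) : ℝ :=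
  sInf {c : ℝ | 0 ≤ c ∧ u ∈ c • newtonPolyhedron n N w}

/-- The set `S` of lattice points of the form `∑ rⱼ wⱼ` with `0 ≤ rⱼ ≤ 1`. -/
def latticeS (n N : ℕ) (w : Fin N → Fin n → ℤ) : Set (Fin n → ℤ) :=
  {s | ∃ r : Fin N → ℝ, (∀ j, 0 ≤ r j ∧ r j ≤ 1) ∧
    intToReal n s = ∑ j, r j • intToReal n (w j)}

open scoped Classical

/-- The additive valuation `ord x = -log_p ‖x‖`, with `ord 0 = +∞`, valued in `EReal`. -/
noncomputable def ord (p : ℕ) {K : Type*} [NormedField K] (x : K) : EReal :=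
  if x = 0 then ⊤ else ((-Real.logb p ‖x‖ : ℝ) : EReal)

/-- The partial sum `γ_l = ∑_{i=0}^l γ^{p^i} / p^i`. -/
noncomputable def gammaPartial (p : ℕ) {K : Type*} [NormedField K] (γ : K) (l : ℕ) : K :=
  ∑ i ∈ Finset.range (l + 1), γ ^ p ^ i / (p : K) ^ i

section Ord

variable {p : ℕ} {K : Type*} [NormedField K] {x y : K} {c d : ℝ}

lemma coe_le_ord_iff (hp : 1 < p) : (c : EReal) ≤ ord p x ↔ ‖x‖ ≤ (p : ℝ) ^ (-c) := by
  have hp' : (1 : ℝ) < p := by exact_mod_cast hp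
  unfold ord
  split_ifs with hx
  · simp only [hx, le_top, norm_zero, true_iff]
    positivity
  · rw [EReal.coe_le_coe_iff, le_neg, Real.logb_le_iff_le_rpow hp' (norm_pos_iff.2 hx)]

lemma ord_neg (x : K) : ord p (-x) = ord p x := by
  simp only [ord, neg_eq_zero, norm_neg]

lemma add_le_ord_mul (hp : 1 < p) (hx : (c : EReal) ≤ ord p x) (hy : (d : EReal) ≤ ord p y) :
    ((c + d : ℝ) : EReal) ≤ ord p (x * y) := by
  have hp0 : (0 : ℝ) < p := by positivity
  rw [coe_le_ord_iff hp] at hx hy ⊢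
  rw [norm_mul, neg_add, Real.rpow_add hp0]
  gcongr

lemma mul_le_ord_pow (hp : 1 < p) (hx : (c : EReal) ≤ ord p x) (k : ℕ) :
    ((k * c : ℝ) : EReal) ≤ ord p (x ^ k) := by
  rw [coe_le_ord_iff hp] at hx ⊢
  rw [norm_pow, neg_mul_eq_mul_neg, mul_comm, Real.rpow_mul_natCast p.cast_nonneg]
  gcongr

lemma sub_le_ord_div_pow (hp : 1 < p) (hpnorm : ‖(p : K)‖ = (p : ℝ)⁻¹)
    (hx : (c : EReal) ≤ ord p x) (i : ℕ) :
    ((c - i : ℝ) : EReal) ≤ ord p (x / (p : K) ^ i) := by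
  have hp0 : (0 : ℝ) < p := by positivity
  rw [coe_le_ord_iff hp] at hx ⊢
  rw [norm_div, norm_pow, hpnorm, inv_pow, div_inv_eq_mul, neg_sub', sub_neg_eq_add,
    Real.rpow_add hp0, Real.rpow_natCast]
  gcongr

variable [IsUltrametricDist K] {ι : Type*} {f : ι → K}

lemma le_ord_sum (hp : 1 < p) (s : Finset ι) (hf : ∀ i ∈ s, (c : EReal) ≤ ord p (f i)) :
    (c : EReal) ≤ ord p (∑ i ∈ s, f i) := by
  simp only [coe_le_ord_iff hp] at hf ⊢
  exact IsUltrametricDist.norm_sum_le_of_forall_le_of_nonneg (by positivity) hf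

lemma le_ord_of_hasSum (hp : 1 < p) (hfx : HasSum f x) (hf : ∀ i, (c : EReal) ≤ ord p (f i)) :
    (c : EReal) ≤ ord p x := by
  have hpartial (s : Finset ι) : ‖∑ i ∈ s, f i‖ ≤ (p : ℝ) ^ (-c) :=
    (coe_le_ord_iff hp).1 (le_ord_sum hp s fun i _ ↦ hf i)
  exact (coe_le_ord_iff hp).2 (le_of_tendsto' hfx.norm hpartial)

end Ord

section Gamma

lemma pow_div_sub_one_le_pow_div_sub_one_sub {R : Type*} [Field R] [LinearOrder R]
    [IsStrictOrderedRing R] {x : R} (hx : 2 ≤ x) {l i : ℕ} (hli : l < i) :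
    x ^ l / (x - 1) ≤ x ^ i / (x - 1) - i := by
  have hx1 : 1 ≤ x - 1 := by linarith
  obtain ⟨k, rfl⟩ : ∃ k, i = k + 1 := Nat.exists_eq_add_one.2 (by lia)
  have hlk : x ^ l ≤ x ^ k := pow_le_pow_right₀ (by linarith) (by lia)
  have bernoulli : ((k + 1 : ℕ) : R) ≤ x ^ k := calc
    ((k + 1 : ℕ) : R) = 1 + k * 1 := by push_cast; ring
    _ ≤ 1 + k * (x - 1) := by gcongr
    _ ≤ x ^ k := one_add_mul_sub_le_pow (by linarith) k
  rw [le_sub_iff_add_le, div_add' _ _ _ (by linarith)]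
  gcongr
  calc x ^ l + ((k + 1 : ℕ) : R) * (x - 1)
      ≤ x ^ k + x ^ k * (x - 1) := by gcongr
    _ = x ^ (k + 1) := by ring

variable {p : ℕ} {K : Type*} [NormedField K] {γ : K}

lemma le_ord_pow_pow_div_pow (hp : 1 < p) (hpnorm : ‖(p : K)‖ = (p : ℝ)⁻¹)
    (hγ : ((1 / ((p : ℝ) - 1) : ℝ) : EReal) ≤ ord p γ) {l i : ℕ} (hli : l < i) :
    (((p : ℝ) ^ l / ((p : ℝ) - 1) : ℝ) : EReal) ≤ ord p (γ ^ p ^ i / (p : K) ^ i) := by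
  have hle : (p : ℝ) ^ l / ((p : ℝ) - 1) ≤ (p ^ i : ℕ) * (1 / ((p : ℝ) - 1)) - i := by
    rw [Nat.cast_pow, mul_one_div]
    exact pow_div_sub_one_le_pow_div_sub_one_sub (by exact_mod_cast hp) hli
  exact (EReal.coe_le_coe hle).trans
    (sub_le_ord_div_pow hp hpnorm (mul_le_ord_pow hp hγ (p ^ i)) i)

lemma le_ord_gammaPartial [IsUltrametricDist K] (hp : 1 < p) (hpnorm : ‖(p : K)‖ = (p : ℝ)⁻¹)
    (hγ : ((1 / ((p : ℝ) - 1) : ℝ) : EReal) ≤ ord p γ)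
    (hsum : HasSum (fun i : ℕ ↦ γ ^ p ^ i / (p : K) ^ i) 0) (l : ℕ) :
    (((p : ℝ) ^ l / ((p : ℝ) - 1) : ℝ) : EReal) ≤ ord p (gammaPartial p γ l) := by
  have htail : HasSum (fun i : ℕ ↦ γ ^ p ^ (i + (l + 1)) / (p : K) ^ (i + (l + 1)))
      (-gammaPartial p γ l) := by
    rw [gammaPartial, ← zero_sub]
    exact (hasSum_nat_add_iff' (l + 1)).2 hsum
  rw [← ord_neg]
  exact le_ord_of_hasSum hp htail fun i ↦ le_ord_pow_pow_div_pow hp hpnorm hγ (by lia)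

end Gamma

section Weight

variable {n N : ℕ} {w : Fin N → Fin n → ℤ}

lemma intToReal_smul (m : ℤ) (v : Fin n → ℤ) :
    intToReal n (m • v) = (m : ℝ) • intToReal n v := by
  ext i
  simp only [intToReal, Pi.smul_apply, smul_eq_mul, Int.cast_mul]

lemma weight_le_of_mem_smul {x : Fin n → ℝ} {c : ℝ} (hc : 0 ≤ c)
    (hx : x ∈ c • newtonPolyhedron n N w) : weight n N w x ≤ c :=
  csInf_le ⟨0, fun _ hb ↦ hb.1⟩ ⟨hc, hx⟩

lemma weight_smul_le {c : ℝ} (hc : 0 ≤ c) (j : Fin N) :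
    weight n N w (c • intToReal n (w j)) ≤ c :=
  weight_le_of_mem_smul hc <| Set.smul_mem_smul_set <|
    subset_convexHull ℝ _ (Set.mem_insert_of_mem _ ⟨j, rfl⟩)

end Weight

lemma finite_setOf_pow_smul_eq {R M ι : Type*} [Ring R] [IsDomain R] [AddCommGroup M] [Module R M]
    [Module.IsTorsionFree R M] [Finite ι] {q : R} (hq : Function.Injective fun l : ℕ ↦ q ^ l)
    {w : ι → M} (hw : ∀ j, w j ≠ 0) (u : M) :
    {jl : ι × ℕ | q ^ jl.2 • w jl.1 = u}.Finite := by
  -- As `w j ≠ 0`, the exponent `l` is determined by `j`, so the first projection is injective.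
  refine Set.Finite.of_finite_image (f := Prod.fst) (Set.toFinite _) ?_
  rintro ⟨j, l⟩ hl ⟨_, m⟩ hm rfl
  have hlm : q ^ l • w j = q ^ m • w j := Eq.trans hl (Eq.symm hm)
  rw [hq (smul_left_injective R (hw j) hlm)]

theorem H_mem_L_general {p : ℕ} (hp : 1 < p) {K : Type*} [NormedField K] [IsUltrametricDist K]
    (hpnorm : ‖(p : K)‖ = (p : ℝ)⁻¹) {γ : K} (hγ : ((1 / ((p : ℝ) - 1) : ℝ) : EReal) ≤ ord p γ)
    (hsum : HasSum (fun i : ℕ ↦ γ ^ p ^ i / (p : K) ^ i) 0)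
    {n N : ℕ} {w : Fin N → Fin n → ℤ} (hw : ∀ j, w j ≠ 0)
    {a : Fin N → K} (ha : ∀ j, (0 : EReal) ≤ ord p (a j)) (u : Fin n → ℤ) :
    ∃ hfin : {jl : Fin N × ℕ | (p ^ jl.2 : ℤ) • w jl.1 = u}.Finite,
      ((weight n N w (intToReal n u) / ((p : ℝ) - 1) : ℝ) : EReal) ≤
        ord p (∑ jl ∈ hfin.toFinset, gammaPartial p γ jl.2 * a jl.1 ^ p ^ jl.2) := by
  have hp' : (1 : ℝ) < p := by exact_mod_cast hp
  have hpow : Function.Injective fun l : ℕ ↦ (p : ℤ) ^ l := Int.pow_right_injective hp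
  refine ⟨finite_setOf_pow_smul_eq hpow hw u, le_ord_sum hp _ ?_⟩
  rintro ⟨j, l⟩ hjl
  obtain rfl : (p ^ l : ℤ) • w j = u := by simpa using hjl
  have hweight : weight n N w (intToReal n ((p ^ l : ℤ) • w j)) ≤ (p : ℝ) ^ l := by
    rw [intToReal_smul, Int.cast_pow, Int.cast_natCast]
    exact weight_smul_le (by positivity) j
  have ha_pow : ((0 : ℝ) : EReal) ≤ ord p (a j ^ p ^ l) := by
    simpa only [mul_zero] using mul_le_ord_pow hp (c := 0) (by exact_mod_cast ha j) (p ^ l)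
  have hterm := add_le_ord_mul hp (le_ord_gammaPartial hp hpnorm hγ hsum l) ha_pow
  refine (EReal.coe_le_coe ?_).trans hterm
  rw [add_zero]
  exact div_le_div_of_nonneg_right hweight (sub_pos.2 hp').le

/-- the formal Laurent series `H(x) = ∑_j h(a_j x^{w_j})`, where
`h(t) = ∑_{l≥0} γ_l t^{p^l}`, lies in `L(1/(p-1), 0)`: for every `u ∈ δ ∩ ℤ^n`,
the coefficient `A_u = ∑_{(j,l) : p^l·w_j = u} γ_l · a_j^{p^l}` (a sum over a
finite set, since all `w_j ≠ 0`) satisfies `ord(A_u) ≥ w(u)/(p-1)`. -/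
theorem H_mem_L (p : ℕ) (hp : p.Prime)
    {K : Type*} [NormedField K] [CompleteSpace K] [CharZero K]
    (hna : ∀ x y : K, ‖x + y‖ ≤ max ‖x‖ ‖y‖)
    (hpnorm : ‖(p : K)‖ = (p : ℝ)⁻¹)
    (γ : K) (hγ : ord p γ = ((1 / ((p : ℝ) - 1) : ℝ) : EReal))
    (hsum : HasSum (fun i : ℕ => γ ^ p ^ i / (p : K) ^ i) 0)
    (n N : ℕ) (hn : 1 ≤ n) (w : Fin N → Fin n → ℤ) (hw : ∀ j, w j ≠ 0)
    (a : Fin N → K) (ha : ∀ j, (0 : EReal) ≤ ord p (a j))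
    (u : Fin n → ℤ) (hu : intToReal n u ∈ deltaCone n N w) :
    ∃ hfin : {jl : Fin N × ℕ | (p ^ jl.2 : ℤ) • w jl.1 = u}.Finite,
      ((weight n N w (intToReal n u) / ((p : ℝ) - 1) : ℝ) : EReal) ≤
        ord p (∑ jl ∈ hfin.toFinset, gammaPartial p γ jl.2 * a jl.1 ^ p ^ jl.2) :=
  have : IsUltrametricDist K :=
    IsUltrametricDist.isUltrametricDist_of_forall_norm_add_le_max_norm hna
  H_mem_L_general hp.one_lt hpnorm hγ.ge hsum hw ha u
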